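/- Let R be a basic left Harada algebra with modules P_{ij} := rad^{j-1}(e_{i1}R) as below, and let f : P_{ij} → P_{il} be an injective homomorphism of right R-modules with j ≥ l. Then for every non-injective homomorphism g : P_{st} → P_{il} (any 1 ≤ s ≤ m, 1 ≤ t ≤ n_s), there exists a homomorphism h : P_{st} → P_{ij} such that g = f ∘ h. -/

import Mathlib

/-!
Common setup.  `K` is an algebraically closed field and `R` a finite-dimensional associative
unital `K`-algebra.  Right `R`-modules are formalized as modules over the opposite ring `Rᵐᵒᵖ`
(so that `MulOpposite.op r • x = x * r`).
-/

open MulOpposite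

/-- The right ideal `xR` of a ring `R`, as a submodule of `R` over `Rᵐᵒᵖ`. -/
def rightIdeal (R : Type) [Ring R] (x : R) : Submodule Rᵐᵒᵖ R :=
  Submodule.span Rᵐᵒᵖ {x}

/-- The Jacobson radical of a submodule `N` (the intersection of the maximal submodules of the
module `N`), viewed as a submodule of the ambient module.  Iterating this operation gives the
iterated radicals `rad^k`. -/
def radSub {A M : Type} [Ring A] [AddCommGroup M] [Module A M] (N : Submodule A M) :
    Submodule A M :=
  Submodule.map N.subtype (sInf {P : Submodule A ↥N | IsCoatom P})

/-- A module is indecomposable if it is nonzero and admits no nontrivial direct sum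
decomposition. -/
def IsIndecomposableMod (A M : Type) [Ring A] [AddCommGroup M] [Module A M] : Prop :=
  Nontrivial M ∧ ∀ N N' : Submodule A M, IsCompl N N' → N = ⊥ ∨ N' = ⊥

/-- A module has projective dimension at most one iff it admits a surjection from a projective
module with projective kernel. -/
def PdLeOne (A : Type) [Ring A] (M : Type) [AddCommGroup M] [Module A M] : Prop :=
  ∃ (P : ModuleCat.{0} A) (f : ↥P →ₗ[A] M),
    Module.Projective A ↥P ∧ Function.Surjective f ∧
      Module.Projective A ↥(LinearMap.ker f)

/-- `Ext¹_A(M,N) = 0`, expressed by the splitting of every short exact sequence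
`0 → N → E → M → 0`. -/
def Ext1Zero (A : Type) [Ring A] (M N : Type) [AddCommGroup M] [Module A M]
    [AddCommGroup N] [Module A N] : Prop :=
  ∀ (E : ModuleCat.{0} A) (i : N →ₗ[A] ↥E) (p : ↥E →ₗ[A] M),
    Function.Injective i → Function.Surjective p → LinearMap.range i = LinearMap.ker p →
    ∃ s : M →ₗ[A] ↥E, p.comp s = LinearMap.id

/-- `X ∈ add T` : `X` is a direct summand of a finite direct sum of copies of `T`. -/
def InAdd (A : Type) [Ring A] (T X : Type) [AddCommGroup T] [Module A T]
    [AddCommGroup X] [Module A X] : Prop :=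
  ∃ (k : ℕ) (f : X →ₗ[A] (Fin k → T)) (g : (Fin k → T) →ₗ[A] X),
    g.comp f = LinearMap.id

/-- `T` is a (finitely generated) tilting right `R`-module: projective dimension at most one,
no self-extensions, and there is a short exact sequence `0 → R → T₀ → T₁ → 0` with
`T₀, T₁ ∈ add T`. -/
def IsTiltingRight (R : Type) [Ring R] (T : Type) [AddCommGroup T] [Module Rᵐᵒᵖ T] : Prop :=
  Module.Finite Rᵐᵒᵖ T ∧ PdLeOne Rᵐᵒᵖ T ∧ Ext1Zero Rᵐᵒᵖ T T ∧
    ∃ (T₀ T₁ : ModuleCat.{0} Rᵐᵒᵖ) (f : R →ₗ[Rᵐᵒᵖ] ↥T₀) (g : ↥T₀ →ₗ[Rᵐᵒᵖ] ↥T₁),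
      InAdd Rᵐᵒᵖ T ↥T₀ ∧ InAdd Rᵐᵒᵖ T ↥T₁ ∧
        Function.Injective f ∧ Function.Surjective g ∧ LinearMap.range f = LinearMap.ker g

/-- `T` is basic: it is an (internal) direct sum of pairwise non-isomorphic indecomposable
submodules. -/
def IsBasicMod (A : Type) [Ring A] (T : Type) [AddCommGroup T] [Module A T] : Prop :=
  ∃ (k : ℕ) (N : Fin k → Submodule A T),
    DirectSum.IsInternal N ∧ (∀ a, IsIndecomposableMod A ↥(N a)) ∧
      ∀ a b, a ≠ b → IsEmpty (↥(N a) ≃ₗ[A] ↥(N b))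

/-- The setoid identifying isomorphic modules (among those with property `P`). -/
def isoSetoid (A : Type) [Ring A] (P : ModuleCat.{0} A → Prop) :
    Setoid {M : ModuleCat.{0} A // P M} where
  r M N := Nonempty (↥M.1 ≃ₗ[A] ↥N.1)
  iseqv := ⟨fun M => ⟨LinearEquiv.refl A ↥M.1⟩, fun ⟨e⟩ => ⟨e.symm⟩,
    fun ⟨e⟩ ⟨f⟩ => ⟨e.trans f⟩⟩

/-- The data exhibiting a ring `R` as a basic left Harada algebra:
a complete set `{e i j}` of orthogonal primitive idempotents with pairwise non-isomorphic
right ideals `(e i j)R` (`R` is basic), such that each `(e i 0)R` is an injective right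
module, and `(e i j)R ≅ rad ((e i (j-1))R)` for `j ≥ 1`.  (Indices are shifted by one from
the paper: the paper's `e_{ij}` is `e i (j-1)` here.) -/
structure HaradaData (R : Type) [Ring R] : Type where
  m : ℕ
  hm : 0 < m
  n : Fin m → ℕ
  hn : ∀ i, 0 < n i
  e : (i : Fin m) → Fin (n i) → R
  idem : ∀ i j, IsIdempotentElem (e i j)
  orth : ∀ p q : Σ i : Fin m, Fin (n i), p ≠ q → e p.1 p.2 * e q.1 q.2 = 0
  sum_eq_one : ∑ p : Σ i : Fin m, Fin (n i), e p.1 p.2 = 1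
  indec : ∀ i j, IsIndecomposableMod Rᵐᵒᵖ ↥(rightIdeal R (e i j))
  basic : ∀ p q : Σ i : Fin m, Fin (n i), p ≠ q →
    IsEmpty (↥(rightIdeal R (e p.1 p.2)) ≃ₗ[Rᵐᵒᵖ] ↥(rightIdeal R (e q.1 q.2)))
  inj : ∀ i, Module.Injective Rᵐᵒᵖ ↥(rightIdeal R (e i ⟨0, hn i⟩))
  rad_iso : ∀ (i : Fin m) (j : Fin (n i)), 0 < j.val →
    Nonempty (↥(rightIdeal R (e i j)) ≃ₗ[Rᵐᵒᵖ]
      ↥(radSub (rightIdeal R (e i ⟨j.val - 1, Nat.lt_of_le_of_lt (Nat.sub_le j.val 1) j.isLt⟩))))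

variable {R : Type} [Ring R]

/-- `H.P i j = rad^j ((e i 0)R)`; this is the paper's `P_{i,j+1} = rad^j (e_{i1}R)`,
a submodule of `R`. -/
def HaradaData.P (H : HaradaData R) (i : Fin H.m) (j : Fin (H.n i)) : Submodule Rᵐᵒᵖ R :=
  radSub^[j.val] (rightIdeal R (H.e i ⟨0, H.hn i⟩))

/-- The quotient module `P_{ik}/P_{il}` (for `l ≥ k` we have `H.P i l ≤ H.P i k`). -/
abbrev HaradaData.Quot (H : HaradaData R) (i : Fin H.m) (k l : Fin (H.n i)) : Type :=
  ↥(H.P i k) ⧸ Submodule.comap (H.P i k).subtype (H.P i l)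

/-- The last index (the paper's `n_i`) in `Fin (H.n i)`. -/
def HaradaData.last (H : HaradaData R) (i : Fin H.m) : Fin (H.n i) :=
  ⟨H.n i - 1, Nat.sub_lt (H.hn i) one_pos⟩

/-- The right ideal `I = ⊕_{i,j} rad^{n_i - j + 1}(e_{ij}R)` of the paper. -/
def HaradaData.I (H : HaradaData R) : Submodule Rᵐᵒᵖ R :=
  ⨆ p : Σ i : Fin H.m, Fin (H.n i),
    radSub^[H.n p.1 - p.2.val] (rightIdeal R (H.e p.1 p.2))

/-- The submodule `T·I` of a right module `T`, for `I` a right ideal of `R`. -/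
def smulSub (I : Submodule Rᵐᵒᵖ R) (T : Type) [AddCommGroup T] [Module Rᵐᵒᵖ T] :
    Submodule Rᵐᵒᵖ T :=
  Submodule.span Rᵐᵒᵖ {x : T | ∃ (t : T) (r : R), r ∈ I ∧ x = op r • t}

section Helpers

/-- A proper submodule of an indecomposable projective module of finite length is contained in
every maximal submodule. -/
theorem local_of_indec {A N : Type} [Ring A] [AddCommGroup N] [Module A N]
    [IsArtinian A N] [IsNoetherian A N] (hproj : Module.Projective A N)
    (hind : IsIndecomposableMod A N) (X : Submodule A N) :
    X = ⊤ ∨ X ≤ sInf {P : Submodule A N | IsCoatom P} := by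
  by_contra! hcon
  obtain ⟨hX, hX2⟩ := hcon
  apply hX2
  refine le_sInf fun M hM => ?_
  by_contra hXM
  have hM' : IsCoatom M := hM
  have hsup : X ⊔ M = ⊤ := by
    apply hM'.2
    exact lt_of_le_of_ne le_sup_right fun h => hXM (h ▸ le_sup_left)
  have hsurj : Function.Surjective (M.mkQ.comp X.subtype) := by
    intro y
    obtain ⟨z, rfl⟩ := M.mkQ_surjective y
    have hz : z ∈ X ⊔ M := by rw [hsup]; trivial
    obtain ⟨x, hx, w, hw, rfl⟩ := Submodule.mem_sup.1 hz
    refine ⟨⟨x, hx⟩, ?_⟩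
    simpa using hw
  obtain ⟨v, hv⟩ := Module.projective_lifting_property (M.mkQ.comp X.subtype) M.mkQ hsurj
  let u : Module.End A N := X.subtype.comp v
  have hu : ∀ x, M.mkQ (u x) = M.mkQ x := fun x => LinearMap.congr_fun hv x
  have hun : ∀ (n : ℕ) x, M.mkQ ((u ^ n) x) = M.mkQ x := by
    intro n
    induction n with
    | zero => intro x; simp
    | succ n ih => intro x; rw [pow_succ', Module.End.mul_apply, hu, ih]
  obtain ⟨n, hn1, hn⟩ := ((Filter.eventually_ge_atTop 1).and
    (LinearMap.eventually_isCompl_ker_pow_range_pow u)).exists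
  rcases hind.2 _ _ hn with h | h
  · have hinj : Function.Injective u := by
      obtain ⟨k, rfl⟩ : ∃ k, n = k + 1 := ⟨n - 1, by omega⟩
      have h1 : Function.Injective (u ^ (k + 1)) := LinearMap.ker_eq_bot.1 h
      intro a b hab
      apply h1
      rw [pow_succ, Module.End.mul_apply, Module.End.mul_apply, hab]
    have hs := IsArtinian.surjective_of_injective_endomorphism u hinj
    apply hX
    rw [eq_top_iff]
    intro x _
    obtain ⟨y, rfl⟩ := hs x
    exact (v y).2
  · apply hM'.1
    rw [eq_top_iff]
    intro x _
    have h0 : (u ^ n) x = 0 := by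
      have : (u ^ n) x ∈ LinearMap.range (u ^ n) := ⟨x, rfl⟩
      rw [h] at this
      simpa using this
    have := hun n x
    rw [h0, map_zero] at this
    simpa using this.symm

theorem radSub_le {A M : Type} [Ring A] [AddCommGroup M] [Module A M] (N : Submodule A M) :
    radSub N ≤ N := Submodule.map_subtype_le _ _

theorem local_sub {A M : Type} [Ring A] [AddCommGroup M] [Module A M]
    [IsArtinian A M] [IsNoetherian A M] (N : Submodule A M) (hproj : Module.Projective A N)
    (hind : IsIndecomposableMod A N) (X : Submodule A M) (hX : X ≤ N) :
    X = N ∨ X ≤ radSub N := by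
  have hmap : Submodule.map N.subtype (X.comap N.subtype) = X := by
    rw [Submodule.map_comap_subtype, inf_eq_right.2 hX]
  rcases local_of_indec hproj hind (X.comap N.subtype) with h | h
  · left
    rw [← hmap, h, Submodule.map_subtype_top]
  · right
    rw [← hmap]
    exact Submodule.map_mono h

/-- Isomorphic submodules have isomorphic radicals. -/
theorem radSub_equiv {A M : Type} [Ring A] [AddCommGroup M] [Module A M]
    {N N' : Submodule A M} (e : N ≃ₗ[A] N') : Nonempty (radSub N ≃ₗ[A] radSub N') := by
  have h1 : (Module.jacobson A N).map (e : N →ₗ[A] N') = Module.jacobson A N' :=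
    Module.map_jacobson_of_bijective e.bijective
  let e1 : Module.jacobson A N ≃ₗ[A] radSub N :=
    Submodule.equivMapOfInjective N.subtype N.injective_subtype _
  let e2 : Module.jacobson A N' ≃ₗ[A] radSub N' :=
    Submodule.equivMapOfInjective N'.subtype N'.injective_subtype _
  exact ⟨(e1.symm.trans (e.submoduleMap _)).trans ((LinearEquiv.ofEq _ _ h1).trans e2)⟩

theorem indec_equiv {A M N : Type} [Ring A] [AddCommGroup M] [Module A M] [AddCommGroup N]
    [Module A N] (e : M ≃ₗ[A] N) (h : IsIndecomposableMod A M) : IsIndecomposableMod A N := by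
  refine ⟨?_, fun X Y hXY => ?_⟩
  · have := h.1
    exact e.symm.toEquiv.nontrivial
  · have h2 := (Submodule.orderIsoMapComap e.symm).isCompl hXY
    rcases h.2 _ _ h2 with h3 | h3
    · left; exact (map_eq_bot_iff (Submodule.orderIsoMapComap e.symm)).1 h3
    · right; exact (map_eq_bot_iff (Submodule.orderIsoMapComap e.symm)).1 h3

theorem proj_self_op (R : Type) [Ring R] : Module.Projective Rᵐᵒᵖ R := by
  let e : Rᵐᵒᵖ ≃ₗ[Rᵐᵒᵖ] R :=
    { MulOpposite.opAddEquiv.symm with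
      map_smul' := fun a b => by simp }
  exact Module.Projective.of_equiv e

theorem proj_rightIdeal (R : Type) [Ring R] (e : R) (he : IsIdempotentElem e) :
    Module.Projective Rᵐᵒᵖ (rightIdeal R e) := by
  have := proj_self_op R
  have hmem : ∀ x : R, e * x ∈ rightIdeal R e := fun x =>
    Submodule.mem_span_singleton.2 ⟨op x, rfl⟩
  let s : R →ₗ[Rᵐᵒᵖ] rightIdeal R e :=
    { toFun := fun x => ⟨e * x, hmem x⟩
      map_add' := fun x y => Subtype.ext (mul_add e x y)
      map_smul' := fun a x => Subtype.ext (by simp [mul_assoc]) }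
  refine Module.Projective.of_split (rightIdeal R e).subtype s ?_
  ext ⟨x, hx⟩
  obtain ⟨a, rfl⟩ := Submodule.mem_span_singleton.1 hx
  change e * (e * a.unop) = e * a.unop
  rw [← mul_assoc, he.eq]

/-- Comparable isomorphic submodules of an artinian module coincide. -/
theorem eq_of_equiv_of_le {A M : Type} [Ring A] [AddCommGroup M] [Module A M] [IsArtinian A M]
    {N N' : Submodule A M} (e : N ≃ₗ[A] N') (h : N ≤ N') : N = N' := by
  let u : N' →ₗ[A] N' := (Submodule.inclusion h).comp (e.symm : N' →ₗ[A] N)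
  have hu : Function.Injective u := (Submodule.inclusion_injective h).comp e.symm.injective
  have hs := IsArtinian.surjective_of_injective_endomorphism u hu
  refine le_antisymm h fun x hx => ?_
  obtain ⟨y, hy⟩ := hs ⟨x, hx⟩
  have : (u y : M) = x := congrArg Subtype.val hy
  rw [← this]
  exact (e.symm y).2

/-- A nonzero map from an indecomposable module with projective image is injective. -/
theorem injective_of_proj_range {A M N : Type} [Ring A] [AddCommGroup M] [Module A M]
    [AddCommGroup N] [Module A N] (hM : IsIndecomposableMod A M) (g : M →ₗ[A] N)
    (hp : Module.Projective A N) (hN : Nontrivial N) (hg : Function.Surjective g) :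
    Function.Injective g := by
  obtain ⟨σ, hσ⟩ := Module.projective_lifting_property g LinearMap.id hg
  have hσ' : ∀ y, g (σ y) = y := fun y => LinearMap.congr_fun hσ y
  have hc : IsCompl (LinearMap.ker g) (LinearMap.range σ) := by
    constructor
    · rw [Submodule.disjoint_def]
      rintro _ hx ⟨y, rfl⟩
      have : y = 0 := by rw [← hσ' y]; exact hx
      rw [this, map_zero]
    · rw [codisjoint_iff, eq_top_iff]
      intro x _
      refine Submodule.mem_sup.2 ⟨x - σ (g x), ?_, σ (g x), ⟨_, rfl⟩, by simp⟩
      simp [hσ']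
  rcases hM.2 _ _ hc with h | h
  · exact LinearMap.ker_eq_bot.1 h
  · exfalso
    obtain ⟨y, hy⟩ := exists_ne (0 : N)
    apply hy
    have : σ y ∈ LinearMap.range σ := ⟨y, rfl⟩
    rw [h, Submodule.mem_bot] at this
    rw [← hσ' y, this, map_zero]

theorem P_equiv {R : Type} [Ring R] (H : HaradaData R) (i : Fin H.m) (j : ℕ) :
    ∀ hj : j < H.n i, Nonempty (rightIdeal R (H.e i ⟨j, hj⟩) ≃ₗ[Rᵐᵒᵖ] H.P i ⟨j, hj⟩) := by
  induction j with
  | zero => exact fun hj => ⟨LinearEquiv.refl _ _⟩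
  | succ j ih =>
    intro hj
    obtain ⟨e⟩ := ih (by omega)
    obtain ⟨e1⟩ := H.rad_iso i ⟨j + 1, hj⟩ (Nat.succ_pos j)
    obtain ⟨e2⟩ := radSub_equiv e
    have h : H.P i ⟨j + 1, hj⟩ = radSub (H.P i ⟨j, by omega⟩) :=
      Function.iterate_succ_apply' _ _ _
    rw [h]
    exact ⟨e1.trans e2⟩

theorem P_proj {R : Type} [Ring R] (H : HaradaData R) (i : Fin H.m) (j : Fin (H.n i)) :
    Module.Projective Rᵐᵒᵖ (H.P i j) := by
  obtain ⟨e⟩ := P_equiv H i j.1 j.2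
  have := proj_rightIdeal R _ (H.idem i j)
  exact Module.Projective.of_equiv e

theorem P_indec {R : Type} [Ring R] (H : HaradaData R) (i : Fin H.m) (j : Fin (H.n i)) :
    IsIndecomposableMod Rᵐᵒᵖ (H.P i j) := by
  obtain ⟨e⟩ := P_equiv H i j.1 j.2
  exact indec_equiv e (H.indec i j)

theorem P_dichotomy {R : Type} [Ring R] [IsArtinian Rᵐᵒᵖ R] [IsNoetherian Rᵐᵒᵖ R]
    (H : HaradaData R) (i : Fin H.m) (X : Submodule Rᵐᵒᵖ R) (hX : X ≤ H.P i ⟨0, H.hn i⟩) (j : ℕ) :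
    ∀ hj : j < H.n i, X ≤ H.P i ⟨j, hj⟩ ∨
      ∃ k : Fin (H.n i), X = H.P i k ∧ H.P i ⟨j, hj⟩ ≤ H.P i k := by
  induction j with
  | zero => exact fun hj => Or.inl hX
  | succ j ih =>
    intro hj
    have h : H.P i ⟨j + 1, hj⟩ = radSub (H.P i ⟨j, by omega⟩) :=
      Function.iterate_succ_apply' _ _ _
    rw [h]
    rcases ih (by omega) with h1 | ⟨k, hk, hk2⟩
    · rcases local_sub _ (P_proj H i _) (P_indec H i _) X h1 with h2 | h2
      · exact Or.inr ⟨_, h2, radSub_le _⟩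
      · exact Or.inl h2
    · exact Or.inr ⟨k, hk, (radSub_le _).trans hk2⟩

theorem P_le_zero {R : Type} [Ring R] (H : HaradaData R) (i : Fin H.m) (j : ℕ) :
    ∀ hj : j < H.n i, H.P i ⟨j, hj⟩ ≤ H.P i ⟨0, H.hn i⟩ := by
  induction j with
  | zero => exact fun hj => le_rfl
  | succ j ih =>
    intro hj
    have h : H.P i ⟨j + 1, hj⟩ = radSub (H.P i ⟨j, by omega⟩) :=
      Function.iterate_succ_apply' _ _ _
    rw [h]
    exact (radSub_le _).trans (ih (by omega))

end Helpers

/-- Lemma 2.3(4).  Let `f : P_{ij} → P_{il}` be injective, `j ≥ l`.  Every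
non-injective `g : P_{st} → P_{il}` factors as `g = f ∘ h`. -/
theorem statement8 (K R : Type) [Field K] [IsAlgClosed K] [Ring R] [Algebra K R]
    [FiniteDimensional K R] (H : HaradaData R) (i : Fin H.m) (j l : Fin (H.n i))
    (f : ↥(H.P i j) →ₗ[Rᵐᵒᵖ] ↥(H.P i l)) (hf : Function.Injective f) (hjl : l ≤ j)
    (s : Fin H.m) (t : Fin (H.n s))
    (g : ↥(H.P s t) →ₗ[Rᵐᵒᵖ] ↥(H.P i l)) (hg : ¬ Function.Injective g) :
    ∃ h : ↥(H.P s t) →ₗ[Rᵐᵒᵖ] ↥(H.P i j), g = f.comp h := by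
  have : IsArtinian Rᵐᵒᵖ R := isArtinian_of_tower K inferInstance
  have : IsNoetherian Rᵐᵒᵖ R := isNoetherian_of_tower K inferInstance
  have hle := P_le_zero H i l.1 l.2
  let F : ↥(H.P i j) →ₗ[Rᵐᵒᵖ] R := (H.P i l).subtype.comp f
  let G : ↥(H.P s t) →ₗ[Rᵐᵒᵖ] R := (H.P i l).subtype.comp g
  have hF : Function.Injective F := (H.P i l).injective_subtype.comp hf
  have hFr : LinearMap.range F ≤ H.P i ⟨0, H.hn i⟩ := by
    rintro _ ⟨x, rfl⟩
    exact hle (f x).2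
  have hGr : LinearMap.range G ≤ H.P i ⟨0, H.hn i⟩ := by
    rintro _ ⟨x, rfl⟩
    exact hle (g x).2
  let eF : ↥(H.P i j) ≃ₗ[Rᵐᵒᵖ] LinearMap.range F := LinearEquiv.ofInjective F hF
  have hFeq : LinearMap.range F = H.P i j := by
    rcases P_dichotomy H i _ hFr j.1 j.2 with h | ⟨k, hk, hk2⟩
    · exact eq_of_equiv_of_le eF.symm h
    · refine (eq_of_equiv_of_le eF ?_).symm
      rw [hk]
      exact hk2
  have hGle : LinearMap.range G ≤ LinearMap.range F := by
    rw [hFeq]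
    rcases P_dichotomy H i _ hGr j.1 j.2 with h | ⟨k, hk, -⟩
    · exact h
    · exfalso
      apply hg
      have hp : Module.Projective Rᵐᵒᵖ (LinearMap.range G) := by
        rw [hk]; exact P_proj H i k
      have hn : Nontrivial (LinearMap.range G) := by
        rw [hk]; exact (P_indec H i k).1
      have hinj := injective_of_proj_range (P_indec H s t) G.rangeRestrict hp hn
        G.surjective_rangeRestrict
      intro a b hab
      apply hinj
      apply Subtype.ext
      change ((g a : _) : R) = g b
      rw [hab]
  refine ⟨(eF.symm : _ →ₗ[Rᵐᵒᵖ] ↥(H.P i j)).comp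
    (G.codRestrict (LinearMap.range F) fun x => hGle ⟨x, rfl⟩), ?_⟩
  ext x
  have h1 := eF.apply_symm_apply ⟨G x, hGle ⟨x, rfl⟩⟩
  exact (congrArg Subtype.val h1).symm
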